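/- Let n, k be positive integers with k ≤ n and let A ∈ ℝ^{2n×2k} be orthogonal and symplectic, i.e., AᵀA = I_{2k} and Aᵀ J_{2n} A = J_{2k}. Then Aᵀ J_{2n} = J_{2k} Aᵀ (equivalently, J_{2n} A = A J_{2k}). -/

import Mathlib

open Matrix
open scoped RealInnerProductSpace

/-- The Euclidean (2-) norm of a real vector. -/
noncomputable def enorm {ι : Type*} [Fintype ι] (v : ι → ℝ) : ℝ :=
  Real.sqrt (∑ i, (v i) ^ 2)

/-- The squared Frobenius norm of a real matrix. -/
noncomputable def frobSq {ι κ : Type*} [Fintype ι] [Fintype κ] (M : Matrix ι κ ℝ) : ℝ :=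
  ∑ i, ∑ j, (M i j) ^ 2

/-- The Frobenius norm of a real matrix. -/
noncomputable def frobNorm {ι κ : Type*} [Fintype ι] [Fintype κ] (M : Matrix ι κ ℝ) : ℝ :=
  Real.sqrt (frobSq M)

/-- The spectral (operator 2-) norm of a real matrix. -/
noncomputable def specNorm {ι κ : Type*} [Fintype ι] [Fintype κ] [DecidableEq κ]
    (M : Matrix ι κ ℝ) : ℝ :=
  ‖LinearMap.toContinuousLinearMap (Matrix.toEuclideanLin M)‖

/-- Matrix-vector multiplication as a map between Euclidean spaces. -/
noncomputable def mulVecE {ι κ : Type*} [Fintype ι] [Fintype κ] [DecidableEq κ]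
    (M : Matrix ι κ ℝ) (v : EuclideanSpace ℝ κ) : EuclideanSpace ℝ ι :=
  Matrix.toEuclideanLin M v

/-- A matrix as a continuous linear map between Euclidean spaces. -/
noncomputable def toCLM {ι κ : Type*} [Fintype ι] [Fintype κ] [DecidableEq κ]
    (M : Matrix ι κ ℝ) : EuclideanSpace ℝ κ →L[ℝ] EuclideanSpace ℝ ι :=
  LinearMap.toContinuousLinearMap (Matrix.toEuclideanLin M)

/-- The canonical Poisson (symplectic) matrix `J = [[0, I], [-I, 0]]` of size `2n × 2n`. -/
noncomputable def Jmat (n : ℕ) : Matrix (Fin n ⊕ Fin n) (Fin n ⊕ Fin n) ℝ :=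
  Matrix.fromBlocks 0 1 (-1) 0

/-- A column selection matrix: its columns are distinct standard basis vectors. -/
def IsSelection {a b : ℕ} (P : Matrix (Fin a) (Fin b) ℝ) : Prop :=
  ∃ β : Fin b → Fin a, Function.Injective β ∧ ∀ i j, P i j = if i = β j then 1 else 0

/-!
`P = A * Aᴴ` is the orthogonal projection onto the range of the isometry `A`, so by Pythagoras a
matrix `B` satisfies `B = B * P` as soon as `B * A` and `B` have the same Gram matrix of rows. For
`B = Aᴴ * U` with `U * Uᴴ = 1`, `B * Bᴴ = Aᴴ * A = 1`, so this is exactly the requirement that the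
compression `V = Aᴴ * U * A` satisfy `V * Vᴴ = 1`. Both Poisson matrices are orthogonal.
-/

section Compression

variable {l m n R : Type*} [Fintype m] [Fintype n] [DecidableEq n]
  [Ring R] [PartialOrder R] [StarRing R] [StarOrderedRing R] [NoZeroDivisors R]

theorem mul_mul_conjTranspose_eq_self {A : Matrix m n R} {B : Matrix l m R}
    (hA : Aᴴ * A = 1) (hB : B * A * (B * A)ᴴ = B * Bᴴ) : B * A * Aᴴ = B := by
  have cross : B * A * Aᴴ * Bᴴ = B * Bᴴ := by
    rw [Matrix.mul_assoc, ← conjTranspose_mul, hB]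
  have gram_proj : B * A * Aᴴ * (B * A * Aᴴ)ᴴ = B * Bᴴ := by
    calc B * A * Aᴴ * (B * A * Aᴴ)ᴴ = B * A * (Aᴴ * A) * (B * A)ᴴ := by
          simp only [conjTranspose_mul, conjTranspose_conjTranspose, Matrix.mul_assoc]
      _ = B * Bᴴ := by rw [hA, Matrix.mul_one, hB]
  have cross_symm : B * (B * A * Aᴴ)ᴴ = B * Bᴴ := by
    simpa only [conjTranspose_mul, conjTranspose_conjTranspose] using congr_arg (·ᴴ) cross
  have gram_residual : (B * A * Aᴴ - B) * (B * A * Aᴴ - B)ᴴ = 0 := by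
    rw [conjTranspose_sub, Matrix.mul_sub, Matrix.sub_mul, Matrix.sub_mul, gram_proj, cross_symm,
      cross, sub_self]
  exact sub_eq_zero.mp (self_mul_conjTranspose_eq_zero.mp gram_residual)

theorem stmt_0_general [DecidableEq m] {A : Matrix m n R} {U : Matrix m m R} {V : Matrix n n R}
    (hA : Aᴴ * A = 1) (hU : U * Uᴴ = 1) (hV : V * Vᴴ = 1) (hUV : Aᴴ * U * A = V) :
    Aᴴ * U = V * Aᴴ := by
  have coisometry : Aᴴ * U * (Aᴴ * U)ᴴ = 1 := by
    calc Aᴴ * U * (Aᴴ * U)ᴴ = Aᴴ * (U * Uᴴ) * A := by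
          simp only [conjTranspose_mul, conjTranspose_conjTranspose, Matrix.mul_assoc]
      _ = 1 := by rw [hU, Matrix.mul_one, hA]
  rw [← hUV]
  exact (mul_mul_conjTranspose_eq_self hA (by rw [hUV, hV, coisometry])).symm

end Compression

theorem Jmat_mul_conjTranspose_self (n : ℕ) : Jmat n * (Jmat n)ᴴ = 1 := by
  simp [Jmat, fromBlocks_transpose, fromBlocks_multiply]

/-- an orthogonal symplectic matrix `A` satisfies `Aᵀ J_{2n} = J_{2k} Aᵀ`. -/
theorem stmt_0 (n k : ℕ) (hn : 0 < n) (hk : 0 < k) (hkn : k ≤ n)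
    (A : Matrix (Fin n ⊕ Fin n) (Fin k ⊕ Fin k) ℝ)
    (horth : Aᵀ * A = 1) (hsymp : Aᵀ * Jmat n * A = Jmat k) :
    Aᵀ * Jmat n = Jmat k * Aᵀ := by
  simp only [← conjTranspose_eq_transpose_of_trivial] at horth hsymp ⊢
  exact stmt_0_general horth (Jmat_mul_conjTranspose_self n) (Jmat_mul_conjTranspose_self k) hsymp
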